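/- arXiv:1606.09052 — 2 statements merged into one kernel-verified Lean document; each statement's English description precedes it below -/
import Mathlib

section
/- Extended commutation: under these hypotheses, M_{α,n}·M_{β,n+p} = q^{p·min(α,β)}·M_{β,n+p}·M_{α,n} for all 0 ≤ α,β ≤ r+1 and all n,p ∈ ℤ with |p| ≤ |β−α|+1. -/
def QS {R : Type*} [Ring R] (q : Rˣ) (x : R) (a : ℤ) (y : R) : Prop :=
  x * y = ((q ^ a : Rˣ) : R) * y * x

theorem QS_central {R : Type*} [Ring R] (q : Rˣ)
    (hq : ∀ x : R, (q : R) * x = x * (q : R)) (a : ℤ) (x : R) :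
    ((q ^ a : Rˣ) : R) * x = x * ((q ^ a : Rˣ) : R) := by
  have h : Commute x (q : R) := (hq x).symm
  exact (h.units_zpow_right a).symm

theorem QS.mul {R : Type*} [Ring R] {q : Rˣ}
    (hq : ∀ x : R, (q : R) * x = x * (q : R)) {x y z : R} {a b : ℤ}
    (h1 : QS q x a y) (h2 : QS q x b z) : QS q x (a + b) (y * z) := by
  unfold QS at *
  have hc := QS_central q hq b y
  calc x * (y * z) = (x * y) * z := by noncomm_ring
    _ = ((q ^ a : Rˣ) : R) * y * (x * z) := by rw [h1]; noncomm_ring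
    _ = ((q ^ a : Rˣ) : R) * (y * ((q ^ b : Rˣ) : R)) * z * x := by rw [h2]; noncomm_ring
    _ = _ := by rw [← hc, zpow_add, Units.val_mul]; noncomm_ring

theorem QS.sub {R : Type*} [Ring R] {q : Rˣ} {x y z : R} {a : ℤ}
    (h1 : QS q x a y) (h2 : QS q x a z) : QS q x a (y - z) := by
  unfold QS at *
  rw [mul_sub, h1, h2]; noncomm_ring

theorem QS.cancel_right {R : Type*} [Ring R] {q : Rˣ}
    (hq : ∀ x : R, (q : R) * x = x * (q : R)) {x y z z' : R} {a b : ℤ}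
    (h1 : QS q x (a + b) (y * z)) (h2 : QS q x b z) (hz : z * z' = 1) : QS q x a y := by
  unfold QS at *
  have hc := QS_central q hq b y
  have key : (x * y) * z = (((q ^ a : Rˣ) : R) * y * x) * z := by
    calc (x * y) * z = x * (y * z) := by noncomm_ring
      _ = ((q ^ a : Rˣ) : R) * (((q ^ b : Rˣ) : R) * y) * z * x := by
        rw [h1, zpow_add, Units.val_mul]; noncomm_ring
      _ = ((q ^ a : Rˣ) : R) * y * (((q ^ b : Rˣ) : R) * z * x) := by rw [hc]; noncomm_ring
      _ = _ := by rw [← h2]; noncomm_ring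
  have := congrArg (· * z') key
  simpa only [mul_assoc, hz, mul_one] using this

theorem QS.cancel_left {R : Type*} [Ring R] {q : Rˣ}
    (hq : ∀ x : R, (q : R) * x = x * (q : R)) {x y y' z : R} {a b : ℤ}
    (h1 : QS q x (a + b) (y * z)) (h2 : QS q x a y) (hy : y' * y = 1) : QS q x b z := by
  unfold QS at *
  have hc := QS_central q hq b y
  have key : ((q ^ a : Rˣ) : R) * (y * (x * z))
      = ((q ^ a : Rˣ) : R) * (y * (((q ^ b : Rˣ) : R) * z * x)) := by
    calc ((q ^ a : Rˣ) : R) * (y * (x * z)) = (((q ^ a : Rˣ) : R) * y * x) * z := by noncomm_ring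
      _ = x * (y * z) := by rw [← h2]; noncomm_ring
      _ = ((q ^ a : Rˣ) : R) * (((q ^ b : Rˣ) : R) * y) * z * x := by
        rw [h1, zpow_add, Units.val_mul]; noncomm_ring
      _ = _ := by rw [hc]; noncomm_ring
  have k2 := (Units.mul_right_inj _).1 key
  have := congrArg (y' * ·) k2
  simpa only [← mul_assoc, hy, one_mul] using this

theorem QS.swap {R : Type*} [Ring R] {q : Rˣ}
    {x y : R} {a : ℤ} (h : QS q x a y) : QS q y (-a) x := by
  unfold QS at *
  rw [mul_assoc, h, mul_assoc, ← mul_assoc, ← Units.val_mul, ← zpow_add]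
  simp

theorem quantum_Q_extended_commutation
    {R : Type*} [Ring R] (q A Δ : Rˣ)
    (hq : ∀ x : R, (q : R) * x = x * (q : R))
    (r : ℕ) (hr : 1 ≤ r)
    (M Mi : ℕ → ℤ → R)
    (hM0 : ∀ n : ℤ, M 0 n = 1)
    (hMtop : ∀ n : ℤ, M (r + 2) n = 0)
    (hMiL : ∀ (α : ℕ) (n : ℤ), α ≤ r + 1 → M α n * Mi α n = 1)
    (hMiR : ∀ (α : ℕ) (n : ℤ), α ≤ r + 1 → Mi α n * M α n = 1)
    (hMsys : ∀ (α : ℕ) (n : ℤ), 1 ≤ α → α ≤ r + 1 →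
      (q : R) ^ α * M α (n + 1) * M α (n - 1) = M α n ^ 2 - M (α + 1) n * M (α - 1) n)
    (hcom : ∀ (α β ε : ℕ) (n : ℤ), ε ≤ 1 → α ≤ r + 1 → β ≤ r + 1 →
      M α n * M β (n + (ε : ℤ)) = (q : R) ^ (ε * min α β) * M β (n + (ε : ℤ)) * M α n)
    (hAΔ : ∀ n : ℤ, M (r + 1) n = ((A ^ n : Rˣ) : R) * (Δ : R))
    (hΔM : ∀ (α : ℕ) (n : ℤ), 1 ≤ α → α ≤ r + 1 →
      (Δ : R) * M α n = ((q ^ ((α : ℤ) * n) : Rˣ) : R) * M α n * (Δ : R))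
    (hAM : ∀ (α : ℕ) (n : ℤ), 1 ≤ α → α ≤ r + 1 →
      (A : R) * M α n = ((q ^ (-(α : ℤ)) : Rˣ) : R) * M α n * (A : R))
    (hΔA : (Δ : R) * (A : R) = (q : R) ^ (r + 1) * (A : R) * (Δ : R)) :
    ∀ (α β : ℕ) (n p : ℤ), α ≤ r + 1 → β ≤ r + 1 →
      |p| ≤ |(β : ℤ) - (α : ℤ)| + 1 →
      M α n * M β (n + p)
        = ((q ^ (p * ((min α β : ℕ) : ℤ)) : Rˣ) : R) * M β (n + p) * M α n := by
  have h0 : ∀ (α β : ℕ) (n : ℤ), α ≤ r + 1 → β ≤ r + 1 → QS q (M α n) 0 (M β n) := by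
    intro α β n ha hb
    have := hcom α β 0 n (by omega) ha hb
    simpa [QS] using this
  have h1 : ∀ (α β : ℕ) (n : ℤ), α ≤ r + 1 → β ≤ r + 1 →
      QS q (M α n) ((min α β : ℕ) : ℤ) (M β (n + 1)) := by
    intro α β n ha hb
    have := hcom α β 1 n (by omega) ha hb
    unfold QS
    rw [zpow_natCast, Units.val_pow_eq_pow_val]
    simpa using this
  have hm1 : ∀ (α β : ℕ) (n : ℤ), α ≤ r + 1 → β ≤ r + 1 →
      QS q (M α n) (-((min α β : ℕ) : ℤ)) (M β (n - 1)) := by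
    intro α β n ha hb
    have := (h1 β α (n - 1) hb ha).swap
    rwa [sub_add_cancel, min_comm] at this
  -- the right-hand side of the M-system
  have hrhs : ∀ (α β : ℕ) (n m c : ℤ), α ≤ r + 1 → 1 ≤ β → β ≤ r + 1 →
      QS q (M α n) c (M β m) → QS q (M α n) c (M (β - 1) m) →
      (β + 1 ≤ r + 1 → QS q (M α n) c (M (β + 1) m)) →
      QS q (M α n) (c + c) (M β (m + 1) * M β (m - 1)) := by
    intro α β n m c ha hb1 hb e1 e2 e3
    have e4 : QS q (M α n) (c + c) (M (β + 1) m * M (β - 1) m) := by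
      by_cases hb' : β + 1 ≤ r + 1
      · exact (e3 hb').mul hq e2
      · have : β = r + 1 := by omega
        subst this
        rw [hMtop]; simp [QS]
    have e5 := (e1.mul hq e1).sub e4
    rw [← pow_two, ← hMsys β m hb1 hb, mul_assoc] at e5
    have e6 : QS q (M α n) 0 ((q : R) ^ β) := by
      have := QS_central q hq β (M α n)
      rw [zpow_natCast, Units.val_pow_eq_pow_val] at this
      simp [QS, this]
    rw [← zero_add (c + c)] at e5
    exact e5.cancel_left hq e6 (y' := ((q⁻¹ ^ β : Rˣ) : R)) (by
      rw [← Units.val_pow_eq_pow_val, ← Units.val_mul]; simp)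
  have main : ∀ p : ℕ, ∀ (α β : ℕ) (n : ℤ), β ≤ r + 1 → α ≤ β → p ≤ β - α + 1 →
      QS q (M α n) ((p : ℤ) * α) (M β (n + p)) ∧
      QS q (M α n) (-((p : ℤ) * α)) (M β (n - p)) := by
    intro p
    induction p using Nat.strong_induction_on with
    | _ p ih =>
      intro α β n hb hab hp
      match p, ih, hp with
      | 0, _, _ => simpa using h0 α β n (by omega) hb
      | 1, _, _ =>
        have a1 := h1 α β n (by omega) hb
        have a2 := hm1 α β n (by omega) hb
        rw [min_eq_left hab] at a1 a2
        simpa using And.intro a1 a2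
      | k + 2, ih, hp =>
        have i1 := ih (k + 1) (by omega) α β n hb hab (by omega)
        have i2 := ih (k + 1) (by omega) α (β - 1) n (by omega) (by omega) (by omega)
        have i3 := fun h => ih (k + 1) (by omega) α (β + 1) n h (by omega) (by omega)
        have i0 := ih k (by omega) α β n hb hab (by omega)
        have f1 := hrhs α β n _ _ (by omega) (by omega) hb i1.1 i2.1 (fun h => (i3 h).1)
        have f2 := hrhs α β n _ _ (by omega) (by omega) hb i1.2 i2.2 (fun h => (i3 h).2)
        constructor
        · have g : QS q (M α n) (((k + 2 : ℕ) : ℤ) * α + (k : ℤ) * α)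
              (M β (n + ((k + 2 : ℕ) : ℤ)) * M β (n + k)) := by
            convert f1 using 1 <;> (push_cast; ring_nf)
          exact g.cancel_right hq i0.1 (hMiL β _ hb)
        · have g : QS q (M α n) (-((k : ℤ) * α) + -(((k + 2 : ℕ) : ℤ) * α))
              (M β (n - k) * M β (n - ((k + 2 : ℕ) : ℤ))) := by
            convert f2 using 1 <;> (push_cast; ring_nf)
          exact g.cancel_left hq i0.2 (hMiR β _ hb)
  have main2 : ∀ (α β : ℕ) (n p : ℤ), β ≤ r + 1 → α ≤ β → |p| ≤ (β : ℤ) - α + 1 →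
      QS q (M α n) (p * α) (M β (n + p)) := by
    intro α β n p hb hab hp
    obtain ⟨k, rfl | rfl⟩ := p.eq_nat_or_neg
    · rw [Nat.abs_cast] at hp
      exact (main k α β n hb hab (by omega)).1
    · rw [abs_neg, Nat.abs_cast] at hp
      have := (main k α β n hb hab (by omega)).2
      rwa [neg_mul, ← sub_eq_add_neg]
  intro α β n p ha hb hp
  change QS q _ _ _
  rcases le_total α β with h | h
  · rw [min_eq_left h]
    rw [abs_of_nonneg (a := (β : ℤ) - α) (by omega)] at hp
    exact main2 α β n p hb h hp
  · rw [min_eq_right h]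
    rw [abs_of_nonpos (a := (β : ℤ) - α) (by omega)] at hp
    have := (main2 β α (n + p) (-p) ha h (by rw [abs_neg]; omega)).swap
    simpa using this
end

section
/- Under these hypotheses the following commutation relations hold: (a) ξ_{α,n}·ξ_{β,n+p} = ξ_{β,n+p}·ξ_{α,n} for 0 ≤ α,β ≤ r+1 and |p| ≤ |α−β|; (b) x_{α,n}·x_{β,n+p} = x_{β,n+p}·x_{α,n} for 1 ≤ α,β ≤ r+1 and |p| ≤ max(|α−β|−1, 0); (c) M_n·ξ_{β,n+p} = q^{−1}·ξ_{β,n+p}·M_n for 1 ≤ β ≤ r+1 and −β ≤ p ≤ β−1. -/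
/-- ξ_{α,n} := M_{α,n} · M_{α,n+1}⁻¹ -/
def xiv {R : Type*} [Ring R] (M Mi : ℕ → ℤ → R) (α : ℕ) (n : ℤ) : R :=
  M α n * Mi α (n + 1)

/-- ξ_{α,n}⁻¹ = M_{α,n+1} · M_{α,n}⁻¹ -/
def xivInv {R : Type*} [Ring R] (M Mi : ℕ → ℤ → R) (α : ℕ) (n : ℤ) : R :=
  M α (n + 1) * Mi α n

/-- x_{α,n} := ξ_{α,n}⁻¹ · ξ_{α-1,n} -/
def xv {R : Type*} [Ring R] (M Mi : ℕ → ℤ → R) (α : ℕ) (n : ℤ) : R :=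
  xivInv M Mi α n * xiv M Mi (α - 1) n

/-- q-commutation with exponent e -/
def QC {R : Type*} [Ring R] (q : Rˣ) (e : ℤ) (a b : R) : Prop :=
  a * b = ((q ^ e : Rˣ) : R) * b * a

theorem QC_central {R : Type*} [Ring R] (q : Rˣ) (hq : ∀ x : R, (q : R) * x = x * (q : R))
    (e : ℤ) (x : R) : ((q ^ e : Rˣ) : R) * x = x * ((q ^ e : Rˣ) : R) := by
  have h : Commute x (q : R) := (hq x).symm
  exact (h.units_zpow_right e).eq.symm

theorem QC_symm {R : Type*} [Ring R] {q : Rˣ} {e : ℤ} {a b : R}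
    (h : QC q e a b) : QC q (-e) b a := by
  unfold QC at *
  rw [mul_assoc, h, mul_assoc, ← mul_assoc, ← Units.val_mul, ← zpow_add]
  simp

theorem QC_mul {R : Type*} [Ring R] {q : Rˣ} (hq : ∀ x : R, (q : R) * x = x * (q : R))
    {e f : ℤ} {a b c : R}
    (h : QC q e a b) (k : QC q f a c) : QC q (e + f) a (b * c) := by
  unfold QC at *
  calc a * (b * c) = (a * b) * c := by rw [mul_assoc]
    _ = ((q ^ e : Rˣ) : R) * b * (a * c) := by rw [h]; simp only [mul_assoc]
    _ = ((q ^ e : Rˣ) : R) * (b * ((q ^ f : Rˣ) : R)) * c * a := by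
        rw [k]; simp only [mul_assoc]
    _ = _ := by
        rw [← QC_central q hq f b, zpow_add, Units.val_mul]; simp only [mul_assoc]

theorem QC_inv {R : Type*} [Ring R] {q : Rˣ} (hq : ∀ x : R, (q : R) * x = x * (q : R))
    {e : ℤ} {a b c : R} (h : QC q e a b) (h1 : b * c = 1) (h2 : c * b = 1) :
    QC q (-e) a c := by
  have h' := QC_symm h
  unfold QC at *
  calc a * c = c * (b * a) * c := by rw [← mul_assoc c, h2, one_mul]
    _ = (c * ((q ^ (-e) : Rˣ) : R)) * a * (b * c) := by rw [h']; simp only [mul_assoc]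
    _ = _ := by rw [h1, ← QC_central q hq]; simp only [mul_assoc, mul_one]

theorem QC_mul_left {R : Type*} [Ring R] {q : Rˣ} (hq : ∀ x : R, (q : R) * x = x * (q : R))
    {e f : ℤ} {a b c : R}
    (h : QC q e b a) (k : QC q f c a) : QC q (e + f) (b * c) a := by
  have := QC_symm (QC_mul hq (QC_symm h) (QC_symm k))
  rwa [show -(-e + -f) = e + f by ring] at this

theorem QC_inv_left {R : Type*} [Ring R] {q : Rˣ} (hq : ∀ x : R, (q : R) * x = x * (q : R))
    {e : ℤ} {a b c : R} (h : QC q e b a) (h1 : b * c = 1) (h2 : c * b = 1) :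
    QC q (-e) c a := by
  simpa using QC_symm (QC_inv hq (QC_symm h) h1 h2)

theorem QC_zero {R : Type*} [Ring R] {q : Rˣ} {a b : R} : QC q 0 a b ↔ a * b = b * a := by
  simp [QC]

theorem quantum_Q_xi_x_commutation
    {R : Type*} [Ring R] (q A Δ : Rˣ)
    (hq : ∀ x : R, (q : R) * x = x * (q : R))
    (r : ℕ) (hr : 1 ≤ r)
    (M Mi : ℕ → ℤ → R)
    (hM0 : ∀ n : ℤ, M 0 n = 1)
    (hMtop : ∀ n : ℤ, M (r + 2) n = 0)
    (hMiL : ∀ (α : ℕ) (n : ℤ), α ≤ r + 1 → M α n * Mi α n = 1)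
    (hMiR : ∀ (α : ℕ) (n : ℤ), α ≤ r + 1 → Mi α n * M α n = 1)
    (hMsys : ∀ (α : ℕ) (n : ℤ), 1 ≤ α → α ≤ r + 1 →
      (q : R) ^ α * M α (n + 1) * M α (n - 1) = M α n ^ 2 - M (α + 1) n * M (α - 1) n)
    (hcom : ∀ (α β ε : ℕ) (n : ℤ), ε ≤ 1 → α ≤ r + 1 → β ≤ r + 1 →
      M α n * M β (n + (ε : ℤ)) = (q : R) ^ (ε * min α β) * M β (n + (ε : ℤ)) * M α n)
    (hAΔ : ∀ n : ℤ, M (r + 1) n = ((A ^ n : Rˣ) : R) * (Δ : R))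
    (hΔM : ∀ (α : ℕ) (n : ℤ), 1 ≤ α → α ≤ r + 1 →
      (Δ : R) * M α n = ((q ^ ((α : ℤ) * n) : Rˣ) : R) * M α n * (Δ : R))
    (hAM : ∀ (α : ℕ) (n : ℤ), 1 ≤ α → α ≤ r + 1 →
      (A : R) * M α n = ((q ^ (-(α : ℤ)) : Rˣ) : R) * M α n * (A : R))
    (hΔA : (Δ : R) * (A : R) = (q : R) ^ (r + 1) * (A : R) * (Δ : R))
    (hext : ∀ (α β : ℕ) (n p : ℤ), α ≤ r + 1 → β ≤ r + 1 →
      |p| ≤ |(β : ℤ) - (α : ℤ)| + 1 →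
      M α n * M β (n + p) = ((q ^ (p * ((min α β : ℕ) : ℤ)) : Rˣ) : R) * M β (n + p) * M α n) :
    (∀ (α β : ℕ) (n p : ℤ), α ≤ r + 1 → β ≤ r + 1 → |p| ≤ |(α : ℤ) - (β : ℤ)| →
      xiv M Mi α n * xiv M Mi β (n + p) = xiv M Mi β (n + p) * xiv M Mi α n)
    ∧ (∀ (α β : ℕ) (n p : ℤ), 1 ≤ α → α ≤ r + 1 → 1 ≤ β → β ≤ r + 1 →
        |p| ≤ max (|(α : ℤ) - (β : ℤ)| - 1) 0 →
      xv M Mi α n * xv M Mi β (n + p) = xv M Mi β (n + p) * xv M Mi α n)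
    ∧ (∀ (β : ℕ) (n p : ℤ), 1 ≤ β → β ≤ r + 1 → -(β : ℤ) ≤ p → p ≤ (β : ℤ) - 1 →
      M 1 n * xiv M Mi β (n + p)
        = ((q⁻¹ : Rˣ) : R) * xiv M Mi β (n + p) * M 1 n) := by
  have hE : ∀ (α β : ℕ) (n m : ℤ), α ≤ r + 1 → β ≤ r + 1 →
      |m - n| ≤ |(β : ℤ) - (α : ℤ)| + 1 →
      QC q ((m - n) * ((min α β : ℕ) : ℤ)) (M α n) (M β m) := by
    intro α β n m ha hb h
    have := hext α β n (m - n) ha hb h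
    rwa [add_sub_cancel] at this
  have hX : ∀ (α β : ℕ) (n m : ℤ), α ≤ r + 1 → β ≤ r + 1 →
      |m - n| ≤ |(β : ℤ) - (α : ℤ)| + 1 → |m + 1 - n| ≤ |(β : ℤ) - (α : ℤ)| + 1 →
      QC q (-((min α β : ℕ) : ℤ)) (M α n) (xiv M Mi β m) := by
    intro α β n m ha hb h h'
    have := QC_mul hq (hE α β n m ha hb h)
      (QC_inv hq (hE α β n (m + 1) ha hb h') (hMiL β _ hb) (hMiR β _ hb))
    unfold xiv
    convert this using 1
    ring
  have hA : ∀ (α β : ℕ) (n m : ℤ), α ≤ r + 1 → β ≤ r + 1 → |m - n| ≤ |(α : ℤ) - (β : ℤ)| →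
      Commute (xiv M Mi α n) (xiv M Mi β m) := by
    intro α β n m ha hb h
    rw [abs_sub_comm (α : ℤ)] at h
    have h3 := abs_le.1 h
    have h1 := hX α β n m ha hb (by omega) (by rw [abs_le]; omega)
    have h2 := hX α β (n + 1) m ha hb (by rw [abs_le]; omega) (by rw [abs_le]; omega)
    have := QC_mul_left hq h1 (QC_inv_left hq h2 (hMiL α _ ha) (hMiR α _ ha))
    rw [add_neg_cancel] at this
    exact QC_zero.1 this
  have hL : ∀ (α : ℕ) (n : ℤ), α ≤ r + 1 → xiv M Mi α n * xivInv M Mi α n = 1 := by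
    intro α n ha
    unfold xiv xivInv
    rw [mul_assoc, ← mul_assoc (Mi α (n + 1)), hMiR α _ ha, one_mul, hMiL α _ ha]
  have hR : ∀ (α : ℕ) (n : ℤ), α ≤ r + 1 → xivInv M Mi α n * xiv M Mi α n = 1 := by
    intro α n ha
    unfold xiv xivInv
    rw [mul_assoc, ← mul_assoc (Mi α n), hMiR α _ ha, one_mul, hMiL α _ ha]
  have hInv : ∀ (α : ℕ) (n : ℤ) (b : R), α ≤ r + 1 → Commute (xiv M Mi α n) b →
      Commute (xivInv M Mi α n) b := by
    intro α n b ha h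
    have := QC_inv_left hq (QC_zero.2 h.eq) (hL α n ha) (hR α n ha)
    rw [neg_zero] at this
    exact QC_zero.1 this
  refine ⟨?_, ?_, ?_⟩
  · intro α β n p ha hb h
    exact hA α β n (n + p) ha hb (by rwa [add_sub_cancel_left])
  · intro α β n p ha1 ha hb1 hb h
    by_cases hab : α = β
    · subst hab
      have : p = 0 := by simpa using h
      subst this
      simp
    · obtain ⟨a, rfl⟩ : ∃ a, α = a + 1 := ⟨α - 1, by omega⟩
      obtain ⟨b, rfl⟩ : ∃ b, β = b + 1 := ⟨β - 1, by omega⟩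
      have k : ∀ i j : ℕ, i ≤ 1 → j ≤ 1 →
          Commute (xiv M Mi (a + i) n) (xiv M Mi (b + j) (n + p)) := by
        intro i j hi hj
        apply hA _ _ _ _ (by omega) (by omega)
        rw [add_sub_cancel_left]
        push_cast at h ⊢
        simp only [abs_eq_max_neg] at h ⊢
        omega
      have k11 := k 1 1 le_rfl le_rfl
      have k10 := k 1 0 le_rfl zero_le_one
      have k01 := k 0 1 zero_le_one le_rfl
      have k00 := k 0 0 zero_le_one zero_le_one
      rw [add_zero] at k10 k01 k00
      rw [add_zero] at k00
      have l01 := (hInv _ _ _ hb k01.symm).symm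
      have l11 := (hInv _ _ _ hb k11.symm).symm
      have : Commute (xv M Mi (a + 1) n) (xv M Mi (b + 1) (n + p)) := by
        unfold xv
        simp only [Nat.add_sub_cancel]
        exact Commute.mul_left ((hInv _ _ _ ha l11).mul_right (hInv _ _ _ ha k10))
          (l01.mul_right k00)
      exact this.eq
  · intro β n p hb1 hb h1 h2
    have := hX 1 β n (n + p) (by omega) hb (by simp only [abs_eq_max_neg]; push_cast; omega)
      (by simp only [abs_eq_max_neg]; push_cast; omega)
    rw [min_eq_left hb1] at this
    simpa [QC] using this
end
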